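/- There is no pair (i,j) with 1 ≤ i < j ≤ n such that blk(i) ≠ blk(j), v_i − v_j ≤ −1, and v^{(i,j)}_a ≠ v^{(i,j)}_b for all a < b with blk(a) = blk(b). (This says that the set Š°_μ of Lemma 4.4 is empty.) -/

import Mathlib

open Finset

noncomputable section

/-- Sum of the first `j` block sizes (blocks are 1-indexed); `blkSum c j` is also the largest
element `ς_j` of the `j`-th block `C_j`. -/
def blkSum (c : ℕ → ℕ) (j : ℕ) : ℕ := ∑ i ∈ Finset.Icc 1 j, c i

/-- Block index of `a ∈ {1,…,n}`: the least `j` with `a ≤ c 1 + ⋯ + c j`. -/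
def blk (c : ℕ → ℕ) (a : ℕ) : ℕ := sInf {j | a ≤ blkSum c j}
theorem bs_zero (c : ℕ → ℕ) : blkSum c 0 = 0 := by simp [blkSum]

theorem bs_succ (c : ℕ → ℕ) (p : ℕ) : blkSum c (p + 1) = blkSum c p + c (p + 1) := by
  unfold blkSum
  rw [Finset.sum_Icc_succ_top (by omega)]

theorem bs_mono (c : ℕ → ℕ) : Monotone (blkSum c) :=
  monotone_nat_of_le_succ (fun p => by rw [bs_succ]; omega)

theorem blk_eq (c : ℕ → ℕ) (a p : ℕ) (h1 : blkSum c p < a) (h2 : a ≤ blkSum c (p + 1)) :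
    blk c a = p + 1 := by
  unfold blk
  apply le_antisymm
  · exact Nat.sInf_le h2
  · apply le_csInf ⟨p + 1, h2⟩
    intro q hq
    by_contra hlt
    have : blkSum c q ≤ blkSum c p := bs_mono c (by omega)
    have hq' : a ≤ blkSum c q := hq
    omega

theorem exists_blk (c : ℕ → ℕ) (a : ℕ) (ha : 1 ≤ a) (l : ℕ) (h : a ≤ blkSum c l) :
    ∃ p, p < l ∧ blkSum c p < a ∧ a ≤ blkSum c (p + 1) := by
  induction l with
  | zero => rw [bs_zero] at h; omega
  | succ l ih =>
    by_cases h' : a ≤ blkSum c l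
    · obtain ⟨p, hp, h1, h2⟩ := ih h'
      exact ⟨p, by omega, h1, h2⟩
    · exact ⟨l, by omega, by omega, h⟩

/-- Lemma 4.4: `Š°_μ = ∅`.  With `v` encoding `μ + ρ` (so that
`(μ+ρ, ε_i - ε_j) = v i - v j`), there is no pair `(i,j)`, `i < j`, with
`ε_i - ε_j ∉ R_I`, `(μ+ρ, ε_i-ε_j) ≤ -1`, and `s_{ε_i-ε_j}(μ+ρ)` regular for `I`
(the swapped `v` injective on each block). -/
theorem S_mu_check_regular_empty
    (l : ℕ) (hl : 2 ≤ l) (c : ℕ → ℕ) (hc : ∀ i ∈ Finset.Icc 1 l, 0 < c i)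
    (hcl : c l = c 1) (hcne : ∀ j, 1 < j → j < l → c j ≠ c 1)
    (n : ℕ) (hn : n = blkSum c l)
    (b : ℕ → ℤ) (hb2 : b 2 = (max (c 1) (c 2) : ℕ) - 1)
    (hbj : ∀ j, 2 ≤ j → j ≤ l - 1 →
      b (j + 1) = (c j : ℤ) + (max (c 1) (c (j + 1)) : ℕ) - (max (c 1) (c j) : ℕ))
    (v : ℕ → ℤ) (hvn : v n = 0)
    (hvsame : ∀ i, 1 ≤ i → i < n → blk c i = blk c (i + 1) → v i = v (i + 1) + 1)
    (hvjump : ∀ j, 1 ≤ j → j < l →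
      v (blkSum c j) = v (blkSum c j + 1) - (b (j + 1) - 1)) :
    ¬ ∃ i j, 1 ≤ i ∧ i < j ∧ j ≤ n ∧ blk c i ≠ blk c j ∧ v i - v j ≤ -1 ∧
        (∀ a a', 1 ≤ a → a < a' → a' ≤ n → blk c a = blk c a' →
          (v ∘ Equiv.swap i j) a ≠ (v ∘ Equiv.swap i j) a') := by
  have hSl : ∀ p, p < l → blkSum c (p + 1) ≤ n := fun p hp => hn ▸ bs_mono c (by omega)
  have hval : ∀ p, p < l → ∀ k, k < c (p + 1) →
      v (blkSum c p + 1 + k) = v (blkSum c p + 1) - k := by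
    intro p hp k
    induction k with
    | zero => intro _; simp
    | succ k ih =>
      intro hk
      have e := ih (by omega)
      have hs := bs_succ c p
      have hS := hSl p hp
      have := hvsame (blkSum c p + 1 + k) (by omega) (by omega)
        (by rw [blk_eq c _ p (by omega) (by omega), blk_eq c _ p (by omega) (by omega)])
      rw [← add_assoc]
      push_cast
      linarith
  have hbot : ∀ p, p < l → v (blkSum c (p + 1)) = v (blkSum c p + 1) - c (p + 1) + 1 := by
    intro p hp
    have hpos := hc (p + 1) (by simp; omega)
    have := hval p hp (c (p + 1) - 1) (by omega)
    have e : blkSum c p + 1 + (c (p + 1) - 1) = blkSum c (p + 1) := by rw [bs_succ]; omega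
    rw [e] at this
    rw [this]
    push_cast [Nat.cast_sub (show 1 ≤ c (p + 1) by omega)]
    ring
  obtain ⟨T, hT⟩ : ∃ T, T = v (blkSum c 0 + 1) := ⟨_, rfl⟩
  have htop : ∀ p, p + 1 < l →
      v (blkSum c (p + 1) + 1) = T - c 1 - 1 + (max (c 1) (c (p + 2)) : ℕ) := by
    intro p
    induction p with
    | zero =>
      intro h
      have h1 := hbot 0 (by omega)
      have h2 := hvjump 1 le_rfl (by omega)
      simp only [zero_add, Nat.reduceAdd] at *
      rw [← hT] at h1
      linarith
    | succ p ih =>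
      intro h
      have e := ih (by omega)
      have h1 := hbot (p + 1) (by omega)
      have h2 := hvjump (p + 2) (by omega) (by omega)
      have h3 := hbj (p + 2) (by omega) (by omega)
      simp only [add_assoc, Nat.reduceAdd] at *
      linarith
  rintro ⟨i, j, hi, hij, hjn, hblk, hv, hreg⟩
  obtain ⟨p, hp, hp1, hp2⟩ := exists_blk c i hi l (by omega)
  obtain ⟨q, hq, hq1, hq2⟩ := exists_blk c j (by omega) l (by omega)
  have hbi := blk_eq c i p hp1 hp2
  have hbj' := blk_eq c j q hq1 hq2
  have hpq : p < q := by
    by_contra hle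
    have hne : p ≠ q := fun h => hblk (by rw [hbi, hbj', h])
    have : blkSum c (q + 1) ≤ blkSum c p := bs_mono c (by omega)
    omega
  have hreg' : ∀ a a', 1 ≤ a → 1 ≤ a' → a ≠ a' → a ≤ n → a' ≤ n → blk c a = blk c a' →
      (v ∘ Equiv.swap i j) a ≠ (v ∘ Equiv.swap i j) a' := by
    intro a a' h1 h1' hne h2 h2' hb
    rcases lt_or_gt_of_ne hne with h | h
    · exact hreg a a' h1 h h2' hb
    · exact (hreg a' a h1' h h2 hb.symm).symm
  -- surjectivity onto intervals
  have hsurj : ∀ r, r < l → ∀ x : ℤ, v (blkSum c r + 1) - c (r + 1) < x →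
      x ≤ v (blkSum c r + 1) →
      ∃ k, 1 ≤ k ∧ k ≤ n ∧ blk c k = r + 1 ∧ v k = x := by
    intro r hr x h1 h2
    obtain ⟨k, hk⟩ := Int.eq_ofNat_of_zero_le (show 0 ≤ v (blkSum c r + 1) - x by omega)
    have hkc : k < c (r + 1) := by omega
    have hs := bs_succ c r
    have hS := hSl r hr
    refine ⟨blkSum c r + 1 + k, by omega, by omega,
      blk_eq c _ r (by omega) (by omega), ?_⟩
    rw [hval r hr k hkc]; omega
  have hrange : ∀ r, r < l → ∀ a, blkSum c r < a → a ≤ blkSum c (r + 1) →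
      v (blkSum c r + 1) - c (r + 1) < v a ∧ v a ≤ v (blkSum c r + 1) := by
    intro r hr a h1 h2
    rw [bs_succ] at h2
    obtain ⟨k, rfl⟩ := Nat.exists_eq_add_of_le (show blkSum c r + 1 ≤ a by omega)
    rw [hval r hr k (by omega)]
    omega
  have hP : ¬ (v (blkSum c p + 1) - c (p + 1) < v j ∧ v j ≤ v (blkSum c p + 1)) := by
    rintro ⟨h1, h2⟩
    obtain ⟨k, hk1, hk2, hk3, hk4⟩ := hsurj p hp _ h1 h2
    have hki : i ≠ k := by rintro rfl; omega
    have hkj : k ≠ j := by rintro rfl; omega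
    apply hreg' i k hi hk1 hki (by omega) hk2 (by omega)
    simp [Equiv.swap_apply_of_ne_of_ne hki.symm hkj, hk4]
  have hQ : ¬ (v (blkSum c q + 1) - c (q + 1) < v i ∧ v i ≤ v (blkSum c q + 1)) := by
    rintro ⟨h1, h2⟩
    obtain ⟨k, hk1, hk2, hk3, hk4⟩ := hsurj q hq _ h1 h2
    have hki : k ≠ i := by rintro rfl; omega
    have hkj : j ≠ k := by rintro rfl; omega
    apply hreg' j k (by omega) hk1 hkj (by omega) hk2 (by omega)
    simp [Equiv.swap_apply_of_ne_of_ne hki hkj.symm, hk4]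
  have hri := hrange p hp i hp1 hp2
  have hrj := hrange q hq j hq1 hq2
  obtain ⟨q, rfl⟩ : ∃ q', q = q' + 1 := ⟨q - 1, by omega⟩
  have tq := htop q hq
  simp only [add_assoc, Nat.reduceAdd] at *
  rcases p with _ | p
  · rw [← hT] at hri hP
    simp only [zero_add] at *
    omega
  · have tp := htop p hp
    simp only [add_assoc, Nat.reduceAdd] at *
    omega

end
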